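/- Let A₁ and A₂ be cusp algebras, and let ψ : 𝔻 → 𝔻 be an injective holomorphic map with ψ(0) = 0 such that g ∘ ψ ∈ A₁ for every g ∈ A₂. Then cod(A₁) ≤ cod(A₂), con(A₁) ≤ con(A₂), and ord(A₁) ≤ ord(A₂). -/

import Mathlib

/-!
An injective holomorphic map has nonvanishing derivative, so `ψ = z φ` with `φ` holomorphic and
`φ(0) ≠ 0` (`zfun_comp`).  Hence composition with `ψ` preserves the vanishing order at the origin,
and removing one Taylor coefficient at a time with a multiple of `ψ ^ k` shows that every
`f ∈ z^k O(𝔻)` can be written as `g ∘ ψ + r` with `g ∈ z^k O(𝔻)` and `r ∈ z^(k+d) O(𝔻)`, for any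
`d` (`approx_comp`).  Since `A₁` contains all functions of high enough order, `r ∈ A₁` for
large `d`.

* With `k = 0`, composition with `ψ` induces a surjection `O(𝔻)/A₂ → O(𝔻)/A₁`, so
  `cod A₁ ≤ cod A₂`.
* If `z^k O(𝔻) ⊆ A₂`, then `g ∈ A₂`, so `g ∘ ψ ∈ A₁` and `f ∈ A₁`: thus `z^k O(𝔻) ⊆ A₁`, and
  `ord A₁ ≤ ord A₂`.
* If every element of `A₁` is constant modulo `z^(n+1) O(𝔻)`, then so is every `g ∘ ψ` with
  `g ∈ A₂`, hence so is every `g ∈ A₂` (`mem_zO_of_comp_mem`): `con A₁ ≤ con A₂`.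
-/


open scoped Classical

noncomputable section

/-- The open unit disk in `ℂ`. -/
def 𝔻 : Set ℂ := Metric.ball 0 1

lemma zero_mem_disk : (0 : ℂ) ∈ 𝔻 := Metric.mem_ball_self one_pos

/-- The origin, as a point of the disk. -/
def d0 : 𝔻 := ⟨0, zero_mem_disk⟩

/-- A function on the disk is holomorphic if it agrees on `𝔻` with a function
that is (complex) differentiable on `𝔻`. -/
def IsHolo (f : 𝔻 → ℂ) : Prop :=
  ∃ F : ℂ → ℂ, DifferentiableOn ℂ F 𝔻 ∧ ∀ z : 𝔻, f z = F z

/-- `O(𝔻)`: the algebra of all holomorphic functions on the disk. -/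
def HolDisk : Subalgebra ℂ (𝔻 → ℂ) where
  carrier := {f | IsHolo f}
  mul_mem' := by
    rintro f g ⟨F, hF, hf⟩ ⟨G, hG, hg⟩
    exact ⟨F * G, hF.mul hG, fun z => by simp [hf z, hg z]⟩
  add_mem' := by
    rintro f g ⟨F, hF, hf⟩ ⟨G, hG, hg⟩
    exact ⟨F + G, hF.add hG, fun z => by simp [hf z, hg z]⟩
  one_mem' := ⟨fun _ => 1, differentiableOn_const 1, fun _ => rfl⟩
  zero_mem' := ⟨fun _ => 0, differentiableOn_const 0, fun _ => rfl⟩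
  algebraMap_mem' := fun c => ⟨fun _ => c, differentiableOn_const c, fun _ => rfl⟩

/-- The `j`-th complex derivative of a holomorphic function on the disk, at a
point `a` (junk value `0` for non-holomorphic functions).  This is well defined
on `𝔻` since any two extensions agree on the open set `𝔻`. -/
def der (j : ℕ) (a : ℂ) (f : 𝔻 → ℂ) : ℂ :=
  if h : IsHolo f then iteratedDeriv j h.choose a else 0

/-- The `k`-th Taylor coefficient at `0` of a holomorphic function on the disk. -/
def taylorCoeff (k : ℕ) (f : 𝔻 → ℂ) : ℂ := der k 0 f / (Nat.factorial k : ℂ)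

/-- The coordinate function `z` on the disk. -/
def zfun : 𝔻 → ℂ := fun z => (z : ℂ)

/-- `z^m O(𝔻)`, as a subspace of functions on the disk. -/
def zO (m : ℕ) : Submodule ℂ (𝔻 → ℂ) where
  carrier := {f | ∃ g, IsHolo g ∧ f = zfun ^ m * g}
  add_mem' := by
    rintro f₁ f₂ ⟨g₁, hg₁, rfl⟩ ⟨g₂, hg₂, rfl⟩
    exact ⟨g₁ + g₂, add_mem (show g₁ ∈ HolDisk from hg₁) (show g₂ ∈ HolDisk from hg₂),
      by ring⟩
  zero_mem' := ⟨0, (HolDisk : Subalgebra ℂ (𝔻 → ℂ)).zero_mem, by simp⟩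
  smul_mem' := by
    rintro c f ⟨g, hg, rfl⟩
    exact ⟨c • g, SMulMemClass.smul_mem c (show g ∈ HolDisk from hg), by
      ext z; simp [zfun]; ring⟩

/-- The quotient vector space `O(𝔻)/A`. -/
abbrev OmodA (A : Subalgebra ℂ (𝔻 → ℂ)) :=
  HolDisk.toSubmodule ⧸ (A.toSubmodule.comap HolDisk.toSubmodule.subtype)

/-- `cod(A) = dim O(𝔻)/A`. -/
def cod (A : Subalgebra ℂ (𝔻 → ℂ)) : ℕ := Module.finrank ℂ (OmodA A)

/-- `ord(A) = min {k : z^{k+1} O(𝔻) ⊆ A}`. -/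
def ord (A : Subalgebra ℂ (𝔻 → ℂ)) : ℕ :=
  sInf {k : ℕ | (zO (k + 1) : Set (𝔻 → ℂ)) ⊆ (A : Set (𝔻 → ℂ))}

/-- `con(A) = max {n : f⁽ʲ⁾(0) = 0 for all f ∈ A and all 1 ≤ j ≤ n}`. -/
def con (A : Subalgebra ℂ (𝔻 → ℂ)) : ℕ :=
  sSup {n : ℕ | ∀ f ∈ A, ∀ j, 1 ≤ j → j ≤ n → der j 0 f = 0}

/-- A cusp algebra: a unital subalgebra of `O(𝔻)` of finite codimension
containing `z^m O(𝔻)` for some `m ≥ 2`. -/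
def IsCuspAlgebra (A : Subalgebra ℂ (𝔻 → ℂ)) : Prop :=
  A ≤ HolDisk ∧ FiniteDimensional ℂ (OmodA A) ∧
    ∃ m, 2 ≤ m ∧ (zO m : Set (𝔻 → ℂ)) ⊆ (A : Set (𝔻 → ℂ))

/-- A simple cusp algebra: a cusp algebra of contact one. -/
def IsSimpleCuspAlgebra (A : Subalgebra ℂ (𝔻 → ℂ)) : Prop :=
  IsCuspAlgebra A ∧ con A = 1

/-- A primitive for a simple cusp algebra:  `π ∈ A` with `π(0) = 0`,
`π'(0) = 0`, `π''(0) = 2`. -/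
def IsPrimitive (A : Subalgebra ℂ (𝔻 → ℂ)) (π : 𝔻 → ℂ) : Prop :=
  π ∈ A ∧ π d0 = 0 ∧ der 1 0 π = 0 ∧ der 2 0 π = 2

/-- `A_n = A ∩ z^{2n} O(𝔻)`. -/
def An (A : Subalgebra ℂ (𝔻 → ℂ)) (n : ℕ) : Submodule ℂ (𝔻 → ℂ) :=
  A.toSubmodule ⊓ zO (2 * n)

/-- `E_n = A_n / A_{n+1}`. -/
abbrev En (A : Subalgebra ℂ (𝔻 → ℂ)) (n : ℕ) :=
  An A n ⧸ ((An A (n + 1)).comap (An A n).subtype)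

/-! ### Holomorphic functions and vanishing order at the origin -/

lemma disk_mem_nhds : 𝔻 ∈ nhds (0 : ℂ) := Metric.ball_mem_nhds 0 one_pos

lemma analyticAt_zero_of_disk {F : ℂ → ℂ} (hF : DifferentiableOn ℂ F 𝔻) : AnalyticAt ℂ F 0 :=
  hF.analyticAt disk_mem_nhds

lemma isHolo_mul {f g : 𝔻 → ℂ} (hf : IsHolo f) (hg : IsHolo g) : IsHolo (f * g) :=
  HolDisk.mul_mem hf hg

lemma isHolo_sub {f g : 𝔻 → ℂ} (hf : IsHolo f) (hg : IsHolo g) : IsHolo (f - g) :=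
  HolDisk.sub_mem hf hg

lemma isHolo_pow {f : 𝔻 → ℂ} (hf : IsHolo f) (n : ℕ) : IsHolo (f ^ n) :=
  HolDisk.pow_mem hf n

lemma isHolo_const (c : ℂ) : IsHolo (fun _ => c) :=
  ⟨fun _ => c, differentiableOn_const c, fun _ => rfl⟩

lemma isHolo_zfun : IsHolo zfun := ⟨id, differentiableOn_id, fun _ => rfl⟩

lemma isHolo_of_mem_zO {k : ℕ} {f : 𝔻 → ℂ} (hf : f ∈ zO k) : IsHolo f := by
  obtain ⟨g, hg, rfl⟩ := hf
  exact isHolo_mul (isHolo_pow isHolo_zfun k) hg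

lemma mem_zO_zero {f : 𝔻 → ℂ} (hf : IsHolo f) : f ∈ zO 0 := ⟨f, hf, by simp⟩

lemma isHolo_comp {f : 𝔻 → ℂ} (hf : IsHolo f) {ψ : 𝔻 → 𝔻} (hψ : IsHolo fun z => (ψ z : ℂ)) :
    IsHolo (f ∘ ψ) := by
  obtain ⟨F, hF, hf⟩ := hf
  obtain ⟨P, hP, hψ⟩ := hψ
  refine ⟨F ∘ P, hF.comp hP fun z hz => ?_, fun z => ?_⟩
  · rw [← hψ ⟨z, hz⟩]
    exact (ψ ⟨z, hz⟩).2
  · simp [hf, hψ]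

/-- Divided difference at the origin: the quotient is `dslope F 0`, whose value at `0` is the
derivative. -/
lemma exists_zfun_mul {f : 𝔻 → ℂ} {F : ℂ → ℂ} (hF : DifferentiableOn ℂ F 𝔻)
    (hf : ∀ z : 𝔻, f z = F z) (h0 : F 0 = 0) :
    ∃ g, IsHolo g ∧ f = zfun * g ∧ g d0 = deriv F 0 := by
  refine ⟨fun z => dslope F 0 z,
    ⟨dslope F 0, (Complex.differentiableOn_dslope disk_mem_nhds).2 hF, fun _ => rfl⟩, ?_, ?_⟩
  · ext z
    have := sub_smul_dslope F 0 (z : ℂ)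
    simp only [sub_zero, smul_eq_mul, h0] at this
    simp [zfun, hf, this]
  · simp [d0]

lemma exists_zfun_mul' {f : 𝔻 → ℂ} (hf : IsHolo f) (h0 : f d0 = 0) :
    ∃ g, IsHolo g ∧ f = zfun * g := by
  obtain ⟨F, hF, hfF⟩ := hf
  obtain ⟨g, hg, hfg, -⟩ := exists_zfun_mul hF hfF ((hfF d0).symm.trans h0)
  exact ⟨g, hg, hfg⟩

/-- Vanishing to order `n` on the disk can be read off any holomorphic extension. -/
lemma mem_zO_iff {f : 𝔻 → ℂ} {F : ℂ → ℂ} (hF : DifferentiableOn ℂ F 𝔻)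
    (hf : ∀ z : 𝔻, f z = F z) (n : ℕ) : f ∈ zO n ↔ (n : ℕ∞) ≤ analyticOrderAt F 0 := by
  have key : ∀ {k : ℕ} {g : 𝔻 → ℂ} {G : ℂ → ℂ}, f = zfun ^ k * g → (∀ z : 𝔻, g z = G z) →
      ∀ᶠ z in nhds (0 : ℂ), F z = (z - 0) ^ k • G z := by
    intro k g G hfg hgG
    filter_upwards [disk_mem_nhds] with z hz
    have := congrFun hfg ⟨z, hz⟩
    simpa [zfun, hf, hgG] using this
  have hFa := analyticAt_zero_of_disk hF
  constructor
  · rintro ⟨g, ⟨G, hG, hgG⟩, hfg⟩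
    exact (natCast_le_analyticOrderAt hFa).2 ⟨G, analyticAt_zero_of_disk hG, key hfg hgG⟩
  · induction n with
    | zero => exact fun _ => mem_zO_zero ⟨F, hF, hf⟩
    | succ n ih =>
      intro h
      obtain ⟨g, ⟨G, hG, hgG⟩, hfg⟩ := ih (le_trans (by exact_mod_cast Nat.le_succ n) h)
      by_cases h0 : G 0 = 0
      · obtain ⟨u, hu, hgu, -⟩ := exists_zfun_mul hG hgG h0
        exact ⟨u, hu, by rw [hfg, hgu]; ring⟩
      · -- otherwise the order of vanishing is exactly `n`
        have := hFa.analyticOrderAt_eq_natCast.2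
          ⟨G, analyticAt_zero_of_disk hG, h0, key hfg hgG⟩
        rw [this] at h
        exact absurd (by exact_mod_cast h) (Nat.not_succ_le_self n)

lemma der_eq_zero_iff {f : 𝔻 → ℂ} (hf : IsHolo f) (n : ℕ) :
    (∀ j, 1 ≤ j → j ≤ n → der j 0 f = 0) ↔ (f - fun _ => f d0) ∈ zO (n + 1) := by
  obtain ⟨hF, hfF⟩ := hf.choose_spec
  have hder : ∀ j, der j 0 f = iteratedDeriv j hf.choose 0 := fun j => by
    rw [der, dif_pos hf]
  generalize hf.choose = F at hF hfF hder
  have hFa := analyticAt_zero_of_disk hF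
  have hca : AnalyticAt ℂ (fun _ : ℂ => F 0) 0 := analyticAt_const
  rw [mem_zO_iff (F := fun z => F z - F 0) (hF.sub (differentiableOn_const _))
      (fun z => by simp [hfF, d0]),
    natCast_le_analyticOrderAt_iff_iteratedDeriv_eq_zero (hFa.fun_sub hca)]
  have hj : ∀ j, 1 ≤ j → iteratedDeriv j (fun z => F z - F 0) 0 = der j 0 f := fun j hj => by
    rw [iteratedDeriv_fun_sub hFa.contDiffAt hca.contDiffAt, iteratedDeriv_const, hder,
      if_neg (by omega), sub_zero]
  constructor
  · intro h i hi
    rcases Nat.eq_zero_or_pos i with rfl | hi'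
    · simp
    · rw [hj i hi', h i hi' (by omega)]
  · intro h j h1 h2
    rw [← hj j h1, h j (by omega)]

/-- Powers of `z` cancel: two continuous functions agreeing off the origin are equal. -/
lemma mem_zO_of_mul {k j : ℕ} {g : 𝔻 → ℂ} (hg : IsHolo g) (h : zfun ^ k * g ∈ zO (k + j)) :
    g ∈ zO j := by
  obtain ⟨u, hu, h⟩ := h
  refine ⟨u, hu, ?_⟩
  obtain ⟨D, hD, hd⟩ := isHolo_sub hg (isHolo_mul (isHolo_pow isHolo_zfun j) hu)
  have hne : ∀ z : 𝔻, (z : ℂ) ≠ 0 → D z = 0 := fun z hz => by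
    have := congrFun h z
    simp only [Pi.mul_apply, Pi.pow_apply, zfun, pow_add, mul_assoc] at this
    rw [← hd]
    simp [zfun, mul_left_cancel₀ (pow_ne_zero k hz) this]
  have h0 : D 0 = 0 := by
    have hc : Filter.Tendsto D (nhdsWithin 0 {0}ᶜ) (nhds (D 0)) :=
      (analyticAt_zero_of_disk hD).continuousAt.tendsto.mono_left nhdsWithin_le_nhds
    refine tendsto_nhds_unique hc (tendsto_const_nhds.congr' ?_)
    filter_upwards [self_mem_nhdsWithin, mem_nhdsWithin_of_mem_nhds disk_mem_nhds] with z hz hz'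
    exact (hne ⟨z, hz'⟩ hz).symm
  rw [← sub_eq_zero]
  ext z
  rw [hd]
  by_cases hz : (z : ℂ) = 0
  · simpa [hz] using h0
  · simpa using hne z hz

/-! ### Injective holomorphic maps -/

/-- An injective holomorphic function has nonzero derivative: otherwise it is locally the `n`-th
power, with `n ≥ 2`, of an open map, and so takes some value twice. -/
lemma deriv_ne_zero_of_injOn {P : ℂ → ℂ} (hP : DifferentiableOn ℂ P 𝔻) (h0 : P 0 = 0)
    (hinj : Set.InjOn P 𝔻) : deriv P 0 ≠ 0 := by
  intro hd
  have hPa := analyticAt_zero_of_disk hP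
  have hnc : ¬ ∀ᶠ z in nhds (0 : ℂ), P z = 0 := by
    intro h
    have h2 := (h.and disk_mem_nhds).filter_mono (nhdsWithin_le_nhds (s := {0}ᶜ))
    obtain ⟨z, ⟨hz, hzD⟩, hz0⟩ := (h2.and self_mem_nhdsWithin).exists
    exact hz0 (hinj hzD zero_mem_disk (hz.trans h0.symm))
  obtain ⟨n, g, hga, hg0, hg⟩ := hPa.exists_eventuallyEq_pow_smul_nonzero_iff.2 hnc
  have hn2 : 2 ≤ n := by
    have h1 := hPa.analyticOrderAt_eq_natCast.2 ⟨g, hga, hg0, hg⟩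
    have h2 : ((2 : ℕ) : ℕ∞) ≤ analyticOrderAt P 0 := by
      rw [natCast_le_analyticOrderAt_iff_iteratedDeriv_eq_zero hPa]
      intro i hi
      interval_cases i
      · simpa using h0
      · simpa using hd
    rw [h1] at h2
    exact_mod_cast h2
  have hn0 : n ≠ 0 := by omega
  -- `w = z g^{1/n}`, where the principal branch is applied to `g / g(0)`, which is near `1`
  obtain ⟨c, hc⟩ : ∃ c : ℂ, c ^ n = g 0 := IsAlgClosed.exists_pow_nat_eq _ (by omega)
  have hc0 : c ≠ 0 := by
    rintro rfl
    exact hg0 (by rw [← hc, zero_pow hn0])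
  let w : ℂ → ℂ := fun z => z * (c * (g z / g 0) ^ ((n : ℂ)⁻¹))
  have hwa : AnalyticAt ℂ w 0 := by
    refine analyticAt_id.mul (analyticAt_const.mul ((hga.div analyticAt_const hg0).cpow
      analyticAt_const ?_))
    simp [hg0]
  have hw0 : w 0 = 0 := by simp [w]
  have hwP : ∀ᶠ z in nhds (0 : ℂ), w z ^ n = P z := by
    filter_upwards [hg] with z hz
    rw [hz]
    simp only [w, mul_pow, hc, Complex.cpow_nat_inv_pow _ hn0, sub_zero, smul_eq_mul]
    field_simp
  have hopen : nhds (0 : ℂ) ≤ Filter.map w (nhds 0) := by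
    have := hwa.eventually_constant_or_nhds_le_map_nhds
    rw [hw0] at this
    refine this.resolve_left fun h => hnc ?_
    filter_upwards [h, hwP] with z h1 h2
    rw [← h2, h1, zero_pow hn0]
  have hU : w '' {z | w z ^ n = P z ∧ z ∈ 𝔻} ∈ nhds (0 : ℂ) :=
    hopen (Filter.image_mem_map (hwP.and disk_mem_nhds))
  have hω := Complex.isPrimitiveRoot_exp n hn0
  generalize Complex.exp (2 * Real.pi * Complex.I / n) = ω at hω
  have hU' : ∀ᶠ x in nhds (0 : ℂ), ω * x ∈ w '' {z | w z ^ n = P z ∧ z ∈ 𝔻} := by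
    have : Filter.Tendsto (fun x => ω * x) (nhds 0) (nhds (0 : ℂ)) := by
      simpa using (continuous_const_mul ω).tendsto (0 : ℂ)
    exact this hU
  have hev := (Filter.Eventually.and hU hU').filter_mono (nhdsWithin_le_nhds (s := {0}ᶜ))
  obtain ⟨x, ⟨⟨a, ⟨ha, haD⟩, hax⟩, ⟨b, ⟨hb, hbD⟩, hbx⟩⟩, hx⟩ :=
    (hev.and self_mem_nhdsWithin).exists
  have hab : a = b := hinj haD hbD (by rw [← ha, ← hb, hax, hbx, mul_pow, hω.pow_eq_one, one_mul])
  rw [← hab, hax] at hbx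
  exact hω.ne_one (by omega) (mul_right_cancel₀ hx (by rw [one_mul, ← hbx]))

/-- `ψ = z φ` with `φ` a holomorphic function not vanishing at the origin. -/
lemma zfun_comp {ψ : 𝔻 → 𝔻} (hψ : IsHolo fun z => (ψ z : ℂ)) (hinj : Function.Injective ψ)
    (hψ0 : ψ d0 = d0) : ∃ φ, IsHolo φ ∧ zfun ∘ ψ = zfun * φ ∧ φ d0 ≠ 0 := by
  obtain ⟨P, hP, hψP⟩ := hψ
  have h0 : P 0 = 0 := by
    have : (ψ d0 : ℂ) = P 0 := hψP d0
    rw [← this, hψ0]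
    rfl
  obtain ⟨φ, hφ, h, hφ0⟩ := exists_zfun_mul (f := zfun ∘ ψ) hP hψP h0
  refine ⟨φ, hφ, h, hφ0 ▸ deriv_ne_zero_of_injOn hP h0 fun a ha b hb hab => ?_⟩
  have h1 : ψ ⟨a, ha⟩ = ψ ⟨b, hb⟩ := Subtype.ext ((hψP ⟨a, ha⟩).trans (hab.trans (hψP ⟨b, hb⟩).symm))
  exact congrArg Subtype.val (hinj h1)

/-! ### Composition with `ψ` -/

section Comp

variable {ψ : 𝔻 → 𝔻} {φ : 𝔻 → ℂ}

lemma pow_mul_comp (h : zfun ∘ ψ = zfun * φ) (k : ℕ) (g : 𝔻 → ℂ) :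
    (zfun ^ k * g) ∘ ψ = zfun ^ k * (φ ^ k * (g ∘ ψ)) := by
  ext z
  have := congrFun h z
  simp only [Function.comp_apply, Pi.mul_apply] at this
  simp only [Function.comp_apply, Pi.mul_apply, Pi.pow_apply, this]
  ring

/-- Each element of `z^k O(𝔻)` agrees to any prescribed order at the origin with some `g ∘ ψ`,
where `g` vanishes to the same order `k`. -/
lemma approx_comp (hφ : IsHolo φ) (h : zfun ∘ ψ = zfun * φ)
    (hφ0 : φ d0 ≠ 0) {k : ℕ} {f : 𝔻 → ℂ} (hf : f ∈ zO k) (d : ℕ) :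
    ∃ g ∈ zO k, f - g ∘ ψ ∈ zO (k + d) := by
  induction d with
  | zero => exact ⟨0, zero_mem _, by simpa using hf⟩
  | succ d ih =>
    obtain ⟨g, hg, u, hu, hfu⟩ := ih
    -- `c` makes `u - c φ ^ (k + d)` vanish at the origin
    let c : ℂ := u d0 / φ d0 ^ (k + d)
    obtain ⟨v, hv, huv⟩ := exists_zfun_mul' (f := u - φ ^ (k + d) * fun _ => c)
      (isHolo_sub hu (isHolo_mul (isHolo_pow hφ _) (isHolo_const c)))
      (by simp [c, mul_div_cancel₀ _ (pow_ne_zero (k + d) hφ0)])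
    refine ⟨g + zfun ^ (k + d) * fun _ => c, add_mem hg ?_, v, hv, ?_⟩
    · exact ⟨zfun ^ d * fun _ => c, isHolo_mul (isHolo_pow isHolo_zfun d) (isHolo_const c),
        by rw [pow_add, mul_assoc]⟩
    · have e : (g + zfun ^ (k + d) * fun _ => c) ∘ ψ
          = g ∘ ψ + zfun ^ (k + d) * (φ ^ (k + d) * fun _ => c) := by
        rw [show (fun _ : 𝔻 => c) = (fun _ : 𝔻 => c) ∘ ψ from rfl, ← pow_mul_comp h]
        rfl
      rw [e, ← sub_sub, hfu, ← mul_sub, huv]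
      ring

/-- Composition with `ψ` does not raise the order of vanishing at the origin. -/
lemma mem_zO_of_comp_mem (hψ : IsHolo fun z => (ψ z : ℂ)) (hψ0 : ψ d0 = d0)
    (hφ : IsHolo φ) (h : zfun ∘ ψ = zfun * φ) (hφ0 : φ d0 ≠ 0) {g : 𝔻 → ℂ} (hg : IsHolo g)
    {n : ℕ} (hgn : g ∘ ψ ∈ zO n) : g ∈ zO n := by
  suffices H : ∀ j ≤ n, g ∈ zO j from H n le_rfl
  intro j
  induction j with
  | zero => exact fun _ => mem_zO_zero hg
  | succ j ih =>
    intro hj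
    obtain ⟨u, hu, hgu⟩ := ih (by omega)
    rw [hgu, pow_mul_comp h, show n = j + (n - j - 1 + 1) by omega] at hgn
    obtain ⟨v, -, hv⟩ := mem_zO_of_mul (isHolo_mul (isHolo_pow hφ j) (isHolo_comp hu hψ)) hgn
    have hu0 : u d0 = 0 := by
      have := congrFun hv d0
      simp only [Pi.mul_apply, Pi.pow_apply, Function.comp_apply, hψ0] at this
      have hz : zfun d0 = 0 := rfl
      simpa [hφ0, hz] using this
    obtain ⟨t, ht, hut⟩ := exists_zfun_mul' hu hu0
    exact ⟨t, ht, by rw [hgu, hut]; ring⟩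

end Comp

/-! ### Comparison of the invariants -/

lemma zO_anti {m n : ℕ} (h : m ≤ n) : zO n ≤ zO m := by
  rintro f ⟨g, hg, rfl⟩
  refine ⟨zfun ^ (n - m) * g, isHolo_mul (isHolo_pow isHolo_zfun _) hg, ?_⟩
  rw [← mul_assoc, ← pow_add, Nat.add_sub_cancel' h]

/-- The set defining `con` is bounded, since `z^m ∈ A` for some `m ≥ 2`. -/
lemma bddAbove_con {A : Subalgebra ℂ (𝔻 → ℂ)} (hA : IsCuspAlgebra A) :
    BddAbove {n : ℕ | ∀ f ∈ A, ∀ j, 1 ≤ j → j ≤ n → der j 0 f = 0} := by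
  obtain ⟨-, -, m, hm, hmA⟩ := hA
  refine ⟨m, fun n hn => ?_⟩
  by_contra hlt
  have h1 : (zfun ^ m * fun _ => (1 : ℂ)) ∈ zO m := ⟨_, isHolo_const 1, rfl⟩
  have h2 := (der_eq_zero_iff (isHolo_of_mem_zO h1) n).1 (hn _ (hmA h1))
  have h3 : (zfun ^ m * fun _ => (1 : ℂ)) ∈ zO (m + 1) := by
    refine zO_anti (show m + 1 ≤ n + 1 by omega) ?_
    convert! h2 using 1
    ext z
    simp [zfun, d0, show m ≠ 0 by omega]
  obtain ⟨v, -, hv⟩ := mem_zO_of_mul (isHolo_const 1) h3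
  simpa [zfun, d0] using congrFun hv d0

/-- If `ψ : 𝔻 → 𝔻` is an injective holomorphic map fixing `0` with
`g ∘ ψ ∈ A₁` for every `g ∈ A₂`, then `cod`, `con` and `ord` of `A₁` are
dominated by those of `A₂`. -/
theorem stmt_6 (A₁ A₂ : Subalgebra ℂ (𝔻 → ℂ))
    (h₁ : IsCuspAlgebra A₁) (h₂ : IsCuspAlgebra A₂)
    (ψ : 𝔻 → 𝔻) (hψ : IsHolo fun z => (ψ z : ℂ))
    (hinj : Function.Injective ψ) (hψ0 : ψ d0 = d0)
    (hcomp : ∀ g ∈ A₂, g ∘ ψ ∈ A₁) :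
    cod A₁ ≤ cod A₂ ∧ con A₁ ≤ con A₂ ∧ ord A₁ ≤ ord A₂ := by
  obtain ⟨φ, hφ, hψφ, hφ0⟩ := zfun_comp hψ hinj hψ0
  obtain ⟨m, -, hm⟩ := h₁.2.2
  have happrox : ∀ {k : ℕ} {f : 𝔻 → ℂ}, f ∈ zO k → ∃ g ∈ zO k, f - g ∘ ψ ∈ A₁ := by
    intro k f hf
    obtain ⟨g, hg, hfg⟩ := approx_comp hφ hψφ hφ0 hf m
    exact ⟨g, hg, hm (zO_anti (Nat.le_add_left m k) hfg)⟩
  refine ⟨?_, ?_, ?_⟩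
  · have := h₂.2.1
    let C : HolDisk.toSubmodule →ₗ[ℂ] HolDisk.toSubmodule :=
      { toFun := fun f => ⟨f.1 ∘ ψ, isHolo_comp f.2 hψ⟩
        map_add' := fun _ _ => rfl
        map_smul' := fun _ _ => rfl }
    refine LinearMap.finrank_le_finrank_of_surjective
      (f := Submodule.mapQ (A₂.toSubmodule.comap HolDisk.toSubmodule.subtype)
        (A₁.toSubmodule.comap HolDisk.toSubmodule.subtype) C fun f hf => hcomp _ hf) fun q => ?_
    obtain ⟨f, rfl⟩ := Submodule.Quotient.mk_surjective _ q
    obtain ⟨g, hg, hfg⟩ := happrox (mem_zO_zero f.2)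
    refine ⟨Submodule.Quotient.mk ⟨g, isHolo_of_mem_zO hg⟩, ?_⟩
    exact ((Submodule.Quotient.eq _).2 hfg).symm
  · refine csSup_le_csSup (bddAbove_con h₂) ⟨0, fun f _ j h1 h2 => by omega⟩ fun n hn g hg => ?_
    have hgH : IsHolo g := h₂.1 hg
    have h := (der_eq_zero_iff (isHolo_comp hgH hψ) n).1 (hn _ (hcomp g hg))
    refine (der_eq_zero_iff hgH n).2 (mem_zO_of_comp_mem hψ hψ0 hφ hψφ hφ0
      (isHolo_sub hgH (isHolo_const _)) ?_)
    simpa [hψ0] using! h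
  · obtain ⟨m₂, hm2, hm₂⟩ := h₂.2.2
    have hne : {k : ℕ | (zO (k + 1) : Set (𝔻 → ℂ)) ⊆ (A₂ : Set (𝔻 → ℂ))}.Nonempty :=
      ⟨m₂ - 1, by rwa [Set.mem_ofPred_eq, Nat.sub_add_cancel (by omega)]⟩
    refine Nat.sInf_le fun f hf => ?_
    obtain ⟨g, hg, hfg⟩ := happrox hf
    simpa using! add_mem hfg (hcomp g (Nat.sInf_mem hne hg))

end
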